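/- arXiv:1707.04804 — 2 statements merged into one kernel-verified Lean document; each statement's English description precedes it below -/
import Mathlib

section
/- η₁(e^{πi/3}) = 2π/√3, where η₁ is the quasi-period of the Weierstrass zeta function. -/
noncomputable section
open scoped Real
open Complex

/-- The lattice point `m + nτ` of the lattice `ℤ + ℤτ`. -/
def latPt (τ : ℂ) (p : ℤ × ℤ) : ℂ := (p.1 : ℂ) + (p.2 : ℂ) * τ

/-- The Weierstrass zeta function of the lattice `ℤ + ℤτ`:
`ζ(z|τ) = 1/z + ∑'_{ω ≠ 0} (1/(z-ω) + 1/ω + z/ω²)`. -/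
def wzeta (τ z : ℂ) : ℂ :=
  1 / z + ∑' p : {p : ℤ × ℤ // p ≠ 0},
    (1 / (z - latPt τ p.1) + 1 / latPt τ p.1 + z / (latPt τ p.1) ^ 2)

/-- The quasi-period `η₁(τ) = 2ζ(ω₁/2|τ)`, with `ω₁ = 1`. -/
def eta1 (τ : ℂ) : ℂ := 2 * wzeta τ (1 / 2)

/-- The quasi-period `η₂(τ) = 2ζ(ω₂/2|τ)`, with `ω₂ = τ`. -/
def eta2 (τ : ℂ) : ℂ := 2 * wzeta τ (τ / 2)

/-!
Row by row, the terms of `ζ(z+1) - ζ(z)` telescope up to `∑ 1/ω²`, so `ζ(z+1) = ζ(z) + G₂(τ)`; as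
`ζ` is odd, `z = -1/2` gives `η₁ = G₂`. The transformation law of `G₂`, which encodes the Legendre
relation, says that `G₂(τ) - π / Im τ` is modular of weight `2`. If `γ ≠ ±1` fixes `τ`, its
automorphy factor `d` at `τ` is not real, so `d² ≠ 1` and this modular function vanishes at `τ`:
`η₁(τ) = π / Im τ` at every elliptic point, in particular at `ρ`, where `Im ρ = √3/2`.
-/

section ZetaSeries

open Filter Bornology Asymptotics EisensteinSeries
open scoped UpperHalfPlane

/-- The summand `1/(z-w) + 1/w + z/w²` of the Weierstrass zeta series at the period `w`; at
`w = 0`, with `x / 0 = 0`, it is the principal part `1/z`. -/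
def zetaSummand (z w : ℂ) : ℂ := 1 / (z - w) + 1 / w + z / w ^ 2

lemma zetaSummand_neg_neg (z w : ℂ) : zetaSummand (-z) (-w) = -zetaSummand z w := by
  simp only [zetaSummand, neg_sub_neg, ← neg_sub z w, one_div, inv_neg, neg_sq, neg_div]
  ring

lemma zetaSummand_add_one_sub (z w : ℂ) :
    zetaSummand (z + 1) w - zetaSummand z w = 1 / (z + 1 - w) - 1 / (z - w) + 1 / w ^ 2 := by
  simp only [zetaSummand]
  ring

lemma zetaSummand_eq_sq_mul {z w : ℂ} (hw : w ≠ 0) (hzw : w ≠ z) :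
    zetaSummand z w = z ^ 2 * ((z - w)⁻¹ * (w ^ 2)⁻¹) := by
  have : z - w ≠ 0 := sub_ne_zero.mpr hzw.symm
  rw [zetaSummand]
  field_simp
  ring

lemma isBigO_zetaSummand_cobounded (z : ℂ) :
    zetaSummand z =O[cobounded ℂ] fun w ↦ ‖w‖ ^ (-3 : ℝ) := by
  have isTheta_sub : (fun w ↦ z - w) =Θ[cobounded ℂ] fun w ↦ w :=
    (isLittleO_const_id_cobounded z).add_isTheta
      ⟨(isBigO_refl _ _).neg_left, (isBigO_refl _ _).neg_right⟩
  have isBigO_prod : (fun w ↦ z ^ 2 * ((z - w)⁻¹ * (w ^ 2)⁻¹)) =O[cobounded ℂ]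
      fun w ↦ w⁻¹ * (w ^ 2)⁻¹ :=
    (isTheta_sub.inv.isBigO.mul (isBigO_refl _ _)).const_mul_left _
  refine (isBigO_prod.congr' ?_ .rfl).trans (.of_norm_eventuallyLE (.of_forall fun w ↦ ?_))
  · filter_upwards [eventually_ne_cobounded 0, eventually_ne_cobounded z] with w hw hzw
    exact (zetaSummand_eq_sq_mul hw hzw).symm
  · refine le_of_eq ?_
    simp only [norm_mul, norm_inv, norm_pow]
    rw [Real.rpow_neg (norm_nonneg w), ← mul_inv, ← pow_succ']
    norm_cast

lemma summable_zetaSummand {ι : Type*} {ω : ι → ℂ} (hω : Tendsto ω cofinite (cobounded ℂ))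
    (hsum : Summable fun i ↦ ‖ω i‖ ^ (-3 : ℝ)) (z : ℂ) : Summable fun i ↦ zetaSummand z (ω i) :=
  summable_of_isBigO hsum ((isBigO_zetaSummand_cobounded z).comp_tendsto hω)

lemma r_mul_norm_le_norm_latPt (τ : ℍ) (p : ℤ × ℤ) : r τ * ‖p‖ ≤ ‖latPt τ p‖ := by
  rcases eq_or_ne p 0 with rfl | hp
  · simp
  · have hvec : ![p.2, p.1] ≠ 0 := by
      contrapose! hp
      simpa [and_comm, Prod.ext_iff] using hp
    have hnorm : ‖![p.2, p.1]‖ = ‖p‖ := by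
      simp [norm_eq_max_natAbs, Prod.norm_def, Int.norm_eq_abs, max_comm]
    simpa [hnorm, latPt, add_comm] using r_mul_max_le τ hvec

lemma tendsto_latPt_cofinite_cobounded (τ : ℍ) :
    Tendsto (latPt τ) cofinite (cobounded ℂ) := by
  have norm_atTop : Tendsto (fun p : ℤ × ℤ ↦ ‖p‖) cofinite atTop :=
    tendsto_norm_comp_cofinite_atTop_of_isClosedEmbedding .id
  exact tendsto_norm_atTop_iff_cobounded.mp <|
    tendsto_atTop_mono (r_mul_norm_le_norm_latPt τ) (norm_atTop.const_mul_atTop (r_pos τ))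

lemma summable_norm_latPt_rpow (τ : ℍ) {k : ℝ} (hk : 2 < k) :
    Summable fun p ↦ ‖latPt τ p‖ ^ (-k) := by
  rw [← ((finTwoArrowEquiv ℤ).trans (Equiv.prodComm ℤ ℤ)).summable_iff]
  refine .of_nonneg_of_le (fun _ ↦ Real.rpow_nonneg (norm_nonneg _) _) (fun v ↦ ?_)
    ((summable_one_div_norm_rpow hk).mul_left (r τ ^ (-k)))
  simpa [latPt, add_comm] using summand_bound τ (by linarith) v

lemma summable_zetaSummand_latPt (τ : ℍ) (z : ℂ) :
    Summable fun p ↦ zetaSummand z (latPt τ p) :=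
  summable_zetaSummand (tendsto_latPt_cofinite_cobounded τ)
    (summable_norm_latPt_rpow τ (by norm_num)) z

lemma wzeta_eq_tsum (τ : ℍ) (z : ℂ) : wzeta τ z = ∑' p, zetaSummand z (latPt τ p) := by
  have principal : zetaSummand z (latPt τ 0) = 1 / z := by simp [zetaSummand, latPt]
  rw [← (summable_zetaSummand_latPt τ z).tsum_subtype_add_tsum_subtype_compl {0},
    tsum_singleton 0 fun p ↦ zetaSummand z (latPt τ p), principal]
  rfl

lemma wzeta_neg (τ z : ℂ) : wzeta τ (-z) = -wzeta τ z := by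
  have latPt_neg (p : ℤ × ℤ) : latPt τ (-p) = -latPt τ p := by
    simp only [latPt, Prod.fst_neg, Prod.snd_neg, Int.cast_neg]
    ring
  let negEquiv : {p : ℤ × ℤ // p ≠ 0} ≃ {p : ℤ × ℤ // p ≠ 0} :=
    (Equiv.neg _).subtypeEquiv fun p ↦ by simp
  rw [wzeta, wzeta, neg_add, ← tsum_neg, ← negEquiv.tsum_eq, one_div_neg_eq_neg_one_div]
  congr 1
  refine tsum_congr fun p ↦ ?_
  change zetaSummand (-z) (latPt τ (-p.1)) = -zetaSummand z (latPt τ p.1)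
  rw [latPt_neg, zetaSummand_neg_neg]

end ZetaSeries

section QuasiPeriod

open Filter Bornology EisensteinSeries SummationFilter
open scoped UpperHalfPlane Topology

lemma tsum_add_one_sub_eq_zero {E : Type*} [AddCommGroup E] [TopologicalSpace E]
    [IsTopologicalAddGroup E] [T2Space E] {f : ℤ → E} (hf : Tendsto f cofinite (𝓝 0))
    (hs : Summable fun m ↦ f (m + 1) - f m) : ∑' m, (f (m + 1) - f m) = 0 := by
  rw [Int.cofinite_eq, tendsto_sup] at hf
  rw [← tsum_eq_of_summable_unconditional (L := symmetricIco ℤ) hs]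
  refine HasSum.tsum_eq (hasSum_symmetricIco_int_iff.mpr ?_)
  have partial_sum (N : ℕ) : ∑ m ∈ Finset.Ico (-(N : ℤ)) N, (f (m + 1) - f m) = f N - f (-N) := by
    rw [← neg_inj, ← Finset.sum_neg_distrib]
    simpa using Finset.sum_Ico_int_sub N f
  simpa [partial_sum] using (hf.2.comp tendsto_natCast_atTop_atTop).sub
    (hf.1.comp (tendsto_neg_atTop_atBot.comp tendsto_natCast_atTop_atTop))

lemma tendsto_inv_add_intCast_cofinite (a : ℂ) :
    Tendsto (fun m : ℤ ↦ (a + m)⁻¹) cofinite (𝓝 0) :=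
  tendsto_inv₀_cobounded.comp <| (tendsto_const_add_cobounded a).comp <|
    tendsto_norm_atTop_iff_cobounded.mp <| by
      simpa using! tendsto_norm_comp_cofinite_atTop_of_isClosedEmbedding
        (Int.isClosedEmbedding_coe_real)

lemma summable_zetaSummand_add_one_sub (τ : ℍ) (z : ℂ) :
    Summable fun p : ℤ × ℤ ↦ zetaSummand (z + 1) (latPt τ p.swap) -
      zetaSummand z (latPt τ p.swap) :=
  (Equiv.prodComm ℤ ℤ).summable_iff.mpr <|
    (summable_zetaSummand_latPt τ (z + 1)).sub (summable_zetaSummand_latPt τ z)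

lemma tsum_zetaSummand_add_one_sub_row (τ : ℍ) (z : ℂ) (n : ℤ) :
    ∑' m : ℤ, (zetaSummand (z + 1) (latPt τ (m, n)) - zetaSummand z (latPt τ (m, n))) =
      e2Summand n τ := by
  let f (m : ℤ) : ℂ := ((n * τ - z - 1) + m)⁻¹
  have summand_eq (m : ℤ) : zetaSummand (z + 1) (latPt τ (m, n)) - zetaSummand z (latPt τ (m, n)) =
      (f (m + 1) - f m) + eisSummand 2 ![n, m] τ := by
    have left : z + 1 - latPt τ (m, n) = -((n * τ - z - 1) + m) := by simp only [latPt]; ring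
    have right : z - latPt τ (m, n) = -((n * τ - z - 1) + (m + 1 : ℤ)) := by
      simp only [latPt]
      push_cast
      ring
    have square : eisSummand 2 ![n, m] τ = 1 / latPt τ (m, n) ^ 2 := by
      simp [eisSummand, latPt, add_comm]
    rw [zetaSummand_add_one_sub, square, left, right]
    simp only [f, one_div, inv_neg]
    ring
  have summable_diff : Summable fun m ↦ f (m + 1) - f m :=
    (((summable_zetaSummand_add_one_sub τ z).prod_factor n).sub (e2Summand_summable n τ)).congr
      fun m ↦ by simp [summand_eq m]
  simp_rw [summand_eq]
  rw [summable_diff.tsum_add (e2Summand_summable n τ),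
    tsum_add_one_sub_eq_zero (tendsto_inv_add_intCast_cofinite _) summable_diff, zero_add,
    e2Summand]

lemma wzeta_add_one (τ : ℍ) (z : ℂ) : wzeta τ (z + 1) = wzeta τ z + G2 τ := by
  have hs := summable_zetaSummand_add_one_sub τ z
  have summable_rows : Summable fun n : ℤ ↦ e2Summand n τ :=
    hs.prod.congr (tsum_zetaSummand_add_one_sub_row τ z)
  rw [← sub_eq_iff_eq_add']
  calc wzeta τ (z + 1) - wzeta τ z
      = ∑' p, (zetaSummand (z + 1) (latPt τ p) - zetaSummand z (latPt τ p)) := by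
        rw [wzeta_eq_tsum, wzeta_eq_tsum, (summable_zetaSummand_latPt τ _).tsum_sub
          (summable_zetaSummand_latPt τ _)]
    _ = ∑' n : ℤ, ∑' m : ℤ,
          (zetaSummand (z + 1) (latPt τ (m, n)) - zetaSummand z (latPt τ (m, n))) := by
        rw [← (Equiv.prodComm ℤ ℤ).tsum_eq]
        exact hs.tsum_prod
    _ = ∑' n : ℤ, e2Summand n τ := tsum_congr (tsum_zetaSummand_add_one_sub_row τ z)
    _ = G2 τ := (tsum_eq_of_summable_unconditional summable_rows).symm

lemma eta1_eq_G2 (τ : ℍ) : eta1 τ = G2 τ := by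
  have shift : wzeta τ (1 / 2) = wzeta τ (-(1 / 2)) + G2 τ := by
    rw [← wzeta_add_one]
    norm_num
  rw [wzeta_neg] at shift
  rw [eta1]
  linear_combination shift

end QuasiPeriod

section EllipticPoints

open EisensteinSeries ModularGroup
open scoped UpperHalfPlane MatrixGroups ModularForm ComplexConjugate

/-- The non-holomorphic completion `G₂(τ) - π / Im τ` of the weight `2` Eisenstein series, which
unlike `G₂` itself is modular. -/
def completedG2 (τ : ℍ) : ℂ := G2 τ - π / τ.im

lemma im_denom (γ : SL(2, ℤ)) (τ : ℍ) : (UpperHalfPlane.denom γ τ).im = γ 1 0 * τ.im := by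
  simp [ModularGroup.denom_apply]

lemma completedG2_slash (γ : SL(2, ℤ)) : completedG2 ∣[(2 : ℤ)] γ = completedG2 := by
  ext τ
  set d := UpperHalfPlane.denom γ τ with hd
  have d_ne_zero : d ≠ 0 := UpperHalfPlane.denom_ne_zero γ τ
  have im_ne_zero : (τ.im : ℂ) ≠ 0 := ofReal_ne_zero.mpr τ.im_ne_zero
  have G2_slash : G2 (γ • τ) * d ^ (-2 : ℤ) = G2 τ - 2 * π * I * γ 1 0 / d := by
    rw [← ModularForm.SL_slash_apply, G2_slash_action]
    rfl
  have im_smul : ((γ • τ).im : ℂ) = τ.im / (d * conj d) := by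
    rw [ModularGroup.im_smul_eq_div_normSq, mul_conj, ofReal_div]
  have sub_conj_d : d - conj d = 2 * I * γ 1 0 * τ.im := by
    rw [sub_conj, hd, im_denom]
    push_cast
    ring
  rw [ModularForm.SL_slash_apply, completedG2, completedG2, sub_mul, G2_slash, im_smul]
  field_simp
  linear_combination π * d ^ 2 * sub_conj_d

lemma eq_zero_of_slash_two_eq_of_smul_eq {f : ℍ → ℂ} {γ : SL(2, ℤ)} {τ : ℍ}
    (hf : f ∣[(2 : ℤ)] γ = f) (hτ : γ • τ = τ) (hγ : γ 1 0 ≠ 0) : f τ = 0 := by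
  set d := UpperHalfPlane.denom γ τ with hd
  have d_im_ne_zero : d.im ≠ 0 := by
    rw [hd, im_denom]
    exact mul_ne_zero (Int.cast_ne_zero.mpr hγ) τ.im_ne_zero
  have d_sq_ne_one : d ^ 2 ≠ 1 := by
    rw [Ne, sq_eq_one_iff]
    rintro (h | h) <;> simp [h] at d_im_ne_zero
  have factor_fixed : f τ * (d ^ 2)⁻¹ = f τ := by
    simpa [ModularForm.SL_slash_apply, hτ] using congrFun hf τ
  by_contra f_ne_zero
  exact d_sq_ne_one (inv_eq_one.mp ((mul_eq_left₀ f_ne_zero).mp factor_fixed))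

theorem stmt_10_general {γ : SL(2, ℤ)} {τ : ℍ} (hτ : γ • τ = τ) (hγ : γ 1 0 ≠ 0) :
    eta1 τ = ((π / τ.im : ℝ) : ℂ) := by
  rw [eta1_eq_G2, ← sub_eq_zero, ofReal_div]
  exact eq_zero_of_slash_two_eq_of_smul_eq (completedG2_slash γ) hτ hγ

/-- The elliptic point `ρ = e^{πi/3}` of order `3`, as a point of the upper half-plane. -/
def rho : ℍ := ⟨exp (π * I / 3), by
  simp [exp_im, Real.sin_pi_div_three]⟩

lemma coe_rho : (rho : ℂ) = exp (π * I / 3) := rfl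

lemma rho_im : rho.im = √3 / 2 := by
  simp [← UpperHalfPlane.coe_im, coe_rho, exp_im, Real.sin_pi_div_three]

lemma rho_sq : (rho : ℂ) ^ 2 = rho - 1 := by
  have rho_add_one_ne_zero : (rho : ℂ) + 1 ≠ 0 := fun h ↦
    rho.im_ne_zero (by simpa using congrArg im h)
  have rho_cube : (rho : ℂ) ^ 3 = -1 := by
    rw [coe_rho, ← exp_nat_mul, ← exp_pi_mul_I]
    congr 1
    push_cast
    ring
  apply mul_left_cancel₀ rho_add_one_ne_zero
  linear_combination rho_cube

lemma T_mul_S_smul_rho : (T * S) • rho = rho := by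
  have rho_ne_zero : (rho : ℂ) ≠ 0 := rho.ne_zero
  ext
  rw [mul_smul, UpperHalfPlane.modular_T_smul, UpperHalfPlane.modular_S_smul]
  simp only [inv_neg, UpperHalfPlane.coe_vadd, ofReal_one]
  field_simp
  linear_combination -rho_sq

end EllipticPoints

/-- `η₁(e^{πi/3}) = 2π/√3`. -/
theorem stmt_10 :
    eta1 (Complex.exp ((π : ℂ) * Complex.I / 3)) = ((2 * π / Real.sqrt 3 : ℝ) : ℂ) := by
  rw [← coe_rho, stmt_10_general T_mul_S_smul_rho (by decide), rho_im]
  congr 1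
  field_simp
end
end

section
/- The Eisenstein series E₂ satisfies E₂((aτ+b)/(cτ+d)) = (cτ+d)² E₂(τ) - (6ic/π)(cτ+d) for every (a b; c d) ∈ SL(2,ℤ) and every τ in the upper half-plane. -/
noncomputable section
open scoped Real MatrixGroups
open Complex

/-- The normalized weight-2 Eisenstein series
`E₂(τ) = 1 - 24 ∑_{n≥1} σ₁(n) e^{2πinτ}`. -/
def E2 (τ : ℂ) : ℂ :=
  1 - 24 * ∑' n : ℕ, ((∑ d ∈ (n + 1).divisors, d : ℕ) : ℂ) *
    Complex.exp (2 * (π : ℂ) * Complex.I * (n + 1) * τ)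

section

open UpperHalfPlane (denom denom_ne_zero)
open scoped UpperHalfPlane ModularForm

lemma E2_coe (z : ℍ) : E2 z = EisensteinSeries.E2 z := by
  rw [E2, EisensteinSeries.E2_eq_tsum_cexp, tsum_pnat_eq_tsum_succ
    (f := fun n : ℕ ↦ (ArithmeticFunction.sigma 1 n : ℂ) * cexp (2 * π * I * z) ^ n)]
  simp only [ArithmeticFunction.sigma_one_apply, ← exp_nat_mul, Nat.cast_add_one,
    mul_left_comm, mul_comm]

lemma apply_smul_eq_denom_zpow_mul_slash (f : ℍ → ℂ) (k : ℤ) (γ : SL(2, ℤ)) (z : ℍ) :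
    f (γ • z) = denom γ z ^ k * (f ∣[k] γ) z := by
  rw [ModularForm.SL_slash_apply, mul_left_comm, ← zpow_add₀ (denom_ne_zero γ z),
    add_neg_cancel, zpow_zero, mul_one]

lemma eisensteinSeries_E2_smul (γ : SL(2, ℤ)) (z : ℍ) :
    EisensteinSeries.E2 (γ • z) =
      denom γ z ^ 2 * EisensteinSeries.E2 z - 6 * I * γ 1 0 / π * denom γ z := by
  have hdenom : denom γ z ≠ 0 := denom_ne_zero γ z
  -- `D2 γ z = 2πi c / (cz + d)`, and `1 / (2ζ(2)) = 3 / π²`.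
  have hdefect : (1 / (2 * riemannZeta 2)) • EisensteinSeries.D2 γ z =
      6 * I * γ 1 0 / π / denom γ z := by
    rw [riemannZeta_two, EisensteinSeries.D2, smul_eq_mul]
    field
  calc EisensteinSeries.E2 (γ • z)
      = denom γ z ^ 2 * (EisensteinSeries.E2 ∣[(2 : ℤ)] γ) z := by
        exact_mod_cast apply_smul_eq_denom_zpow_mul_slash EisensteinSeries.E2 2 γ z
    _ = denom γ z ^ 2 * (EisensteinSeries.E2 z - 6 * I * γ 1 0 / π / denom γ z) := by
        rw [EisensteinSeries.E2_slash_action, Pi.sub_apply, Pi.smul_apply, hdefect]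
    _ = denom γ z ^ 2 * EisensteinSeries.E2 z - 6 * I * γ 1 0 / π * denom γ z := by
        field

end

/-- `E₂((aτ+b)/(cτ+d)) = (cτ+d)² E₂(τ) - (6ic/π)(cτ+d)` for every
`(a b; c d) ∈ SL(2,ℤ)` and every `τ` in the upper half-plane. -/
theorem stmt_14 (γ : SL(2, ℤ)) (τ : ℂ) (hτ : 0 < τ.im) :
    E2 ((((γ 0 0 : ℤ) : ℂ) * τ + ((γ 0 1 : ℤ) : ℂ)) /
        (((γ 1 0 : ℤ) : ℂ) * τ + ((γ 1 1 : ℤ) : ℂ))) =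
      (((γ 1 0 : ℤ) : ℂ) * τ + ((γ 1 1 : ℤ) : ℂ)) ^ 2 * E2 τ -
        6 * Complex.I * ((γ 1 0 : ℤ) : ℂ) / (π : ℂ) *
          (((γ 1 0 : ℤ) : ℂ) * τ + ((γ 1 1 : ℤ) : ℂ)) := by
  let z : UpperHalfPlane := ⟨τ, hτ⟩
  have hsmul : ((γ • z : UpperHalfPlane) : ℂ) = (γ 0 0 * τ + γ 0 1) / (γ 1 0 * τ + γ 1 1) := by
    simpa using UpperHalfPlane.coe_specialLinearGroup_apply γ z
  have hdenom : UpperHalfPlane.denom γ z = γ 1 0 * τ + γ 1 1 := ModularGroup.denom_apply γ z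
  have hτz : E2 τ = EisensteinSeries.E2 z := E2_coe z
  rw [← hsmul, ← hdenom, E2_coe, hτz]
  exact eisensteinSeries_E2_smul γ z
end
end
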